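/- arXiv:2501.00492 — 5 statements merged into one kernel-verified Lean document; each statement's English description precedes it below -/
import Mathlib

section
/- Soundness of the Hilbert calculus H with respect to the 4-valued Nmatrix semantics for the minimal modal logic M: for every set of formulas Γ and every formula A, if Γ ⊢_H A then every valuation v ∈ F that designates all formulas of Γ also designates A. -/
/-- Formulas of the modal language: propositional variables, negation,
the modality ⊖ (here `box`), and implication. -/
inductive Form : Type
  | var : ℕ → Form
  | neg : Form → Form
  | box : Form → Form
  | imp : Form → Form → Form

/-- A valuation `v = (v1, v2)` over the 4-valued Nmatrix for the minimal modal
logic M: `v1` behaves classically on ¬ and →, and `v1(⊖A) = v2(A)`;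
`v2` is otherwise unconstrained. -/
structure Val where
  v1 : Form → Fin 2
  v2 : Form → Fin 2
  neg_eq : ∀ A, v1 (Form.neg A) = 1 - v1 A
  imp_eq : ∀ A B, v1 (Form.imp A B) = max (1 - v1 A) (v1 B)
  box_eq : ∀ A, v1 (Form.box A) = v2 A

/-- The Hilbert calculus H for the minimal modal logic M. -/
inductive HM : Set Form → Form → Prop
  | hyp {Γ A} : A ∈ Γ → HM Γ A
  | ax1 {Γ} (A B : Form) : HM Γ (A.imp (B.imp A))
  | ax2 {Γ} (A B C : Form) :
      HM Γ ((A.imp (B.imp C)).imp ((A.imp B).imp (A.imp C)))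
  | ax3 {Γ} (A B : Form) : HM Γ ((B.neg.imp A.neg).imp (A.imp B))
  | mp {Γ A B} : HM Γ (A.imp B) → HM Γ A → HM Γ B

/-- Soundness of H w.r.t. the 4-valued Nmatrix semantics for M. -/
theorem soundness_M (Γ : Set Form) (A : Form) (h : HM Γ A) :
    ∀ v : Val, (∀ B ∈ Γ, v.v1 B = 1) → v.v1 A = 1 := by
  intro v hv
  induction h with
  | hyp hA => exact hv _ hA
  | ax1 A B =>
    simp only [v.imp_eq]
    generalize v.v1 A = a
    generalize v.v1 B = b
    revert a b
    decide
  | ax2 A B C =>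
    simp only [v.imp_eq]
    generalize v.v1 A = a
    generalize v.v1 B = b
    generalize v.v1 C = c
    revert a b c
    decide
  | ax3 A B =>
    simp only [v.imp_eq, v.neg_eq]
    generalize v.v1 A = a
    generalize v.v1 B = b
    revert a b
    decide
  | @mp A B _ _ h1 h2 =>
    rw [v.imp_eq, h2] at h1
    revert h1
    generalize v.v1 B = b
    revert b
    decide
end

section
/- Completeness of the Hilbert calculus H with respect to the 4-valued Nmatrix semantics for the minimal modal logic M: for every set of formulas Γ and every formula A, if every valuation v ∈ F that designates all formulas of Γ also designates A, then Γ ⊢_H A. -/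
theorem HM.mono {Γ Δ : Set Form} {A : Form} (h : HM Γ A) (hs : Γ ⊆ Δ) : HM Δ A := by
  induction h with
  | hyp h => exact .hyp (hs h)
  | ax1 A B => exact .ax1 A B
  | ax2 A B C => exact .ax2 A B C
  | ax3 A B => exact .ax3 A B
  | mp _ _ ih1 ih2 => exact .mp ih1 ih2

theorem HM.refl (Γ : Set Form) (A : Form) : HM Γ (A.imp A) :=
  .mp (.mp (.ax2 A (A.imp A) A) (.ax1 _ _)) (.ax1 _ _)

theorem HM.k {Γ : Set Form} {A : Form} (B : Form) (h : HM Γ A) : HM Γ (B.imp A) :=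
  .mp (.ax1 _ _) h

theorem HM.ded {Γ Δ : Set Form} {A B : Form} (h : HM Δ B) (hs : Δ = insert A Γ) :
    HM Γ (A.imp B) := by
  induction h with
  | hyp h =>
    subst hs
    rcases h with rfl | h
    · exact HM.refl _ _
    · exact HM.k _ (.hyp h)
  | ax1 A B => exact HM.k _ (.ax1 A B)
  | ax2 A B C => exact HM.k _ (.ax2 A B C)
  | ax3 A B => exact HM.k _ (.ax3 A B)
  | mp _ _ ih1 ih2 => exact .mp (.mp (.ax2 _ _ _) ih1) ih2

theorem HM.trans {Γ : Set Form} {A B C : Form} (h1 : HM Γ (A.imp B)) (h2 : HM Γ (B.imp C)) :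
    HM Γ (A.imp C) :=
  .mp (.mp (.ax2 _ _ _) (HM.k _ h2)) h1

theorem HM.expl {Γ : Set Form} {A : Form} (B : Form) (h1 : HM Γ A.neg) (h2 : HM Γ A) : HM Γ B :=
  .mp (.mp (.ax3 _ _) (HM.k _ h1)) h2

theorem HM.dne (Γ : Set Form) (A : Form) : HM Γ (A.neg.neg.imp A) := by
  refine HM.ded (Δ := insert A.neg.neg Γ) ?_ rfl
  have h : HM (insert A.neg.neg Γ) A.neg.neg := .hyp (Set.mem_insert _ _)
  exact .mp (.mp (.ax3 _ _) (.mp (.ax3 _ _) (HM.k _ h))) h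

theorem HM.dni (Γ : Set Form) (A : Form) : HM Γ (A.imp A.neg.neg) :=
  .mp (.ax3 _ _) (HM.dne _ _)

theorem HM.clavius {Γ : Set Form} {A : Form} (h : HM Γ (A.neg.imp A)) : HM Γ A := by
  have h1 : HM Γ (A.neg.imp (A.imp A).neg) := by
    refine HM.ded (Δ := insert A.neg Γ) ?_ rfl
    have h0 : HM (insert A.neg Γ) A.neg := .hyp (Set.mem_insert _ _)
    exact HM.expl _ h0 (.mp (h.mono (Set.subset_insert _ _)) h0)
  exact .mp (.mp (.ax3 _ _) h1) (HM.refl _ _)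

theorem HM.cases {Γ : Set Form} {A B : Form} (h1 : HM Γ (B.imp A)) (h2 : HM Γ (B.neg.imp A)) :
    HM Γ A := by
  have h3 : HM Γ (A.neg.imp B.neg) :=
    .mp (.ax3 _ _) (((HM.dne _ _).trans h1).trans (HM.dni _ _))
  exact HM.clavius (h3.trans h2)

theorem HM.chain {c : Set (Set Form)} (hc : IsChain (· ⊆ ·) c) (hne : c.Nonempty)
    {Δ : Set Form} {A : Form} (h : HM Δ A) (hs : Δ = ⋃₀ c) : ∃ s ∈ c, HM s A := by
  obtain ⟨s0, hs0⟩ := hne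
  induction h with
  | hyp h =>
    subst hs
    obtain ⟨s, hsc, h⟩ := h
    exact ⟨s, hsc, .hyp h⟩
  | ax1 A B => exact ⟨s0, hs0, .ax1 A B⟩
  | ax2 A B C => exact ⟨s0, hs0, .ax2 A B C⟩
  | ax3 A B => exact ⟨s0, hs0, .ax3 A B⟩
  | mp _ _ ih1 ih2 =>
    obtain ⟨s, hsc, h1⟩ := ih1
    obtain ⟨t, htc, h2⟩ := ih2
    rcases hc.total hsc htc with hst | hst
    · exact ⟨t, htc, .mp (h1.mono hst) h2⟩
    · exact ⟨s, hsc, .mp h1 (h2.mono hst)⟩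

/-- Completeness of H w.r.t. the 4-valued Nmatrix semantics for M. -/
theorem completeness_M (Γ : Set Form) (A : Form)
    (h : ∀ v : Val, (∀ B ∈ Γ, v.v1 B = 1) → v.v1 A = 1) :
    HM Γ A := by
  classical
  by_contra hA
  obtain ⟨Δ, hΓ, hmax⟩ := zorn_subset_nonempty {S : Set Form | ¬ HM S A}
    (fun c hcS hc hne => ⟨⋃₀ c, fun hd => by
        obtain ⟨s, hs, h1⟩ := HM.chain hc hne hd rfl
        exact hcS hs h1, fun s hs => Set.subset_sUnion_of_mem hs⟩) Γ hA
  have hΔ : ¬ HM Δ A := hmax.prop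
  have hout : ∀ B, B ∉ Δ → HM Δ (B.imp A) := by
    intro B hB
    by_contra hn
    have h1 : insert B Δ ∈ {S : Set Form | ¬ HM S A} := fun hd => hn (HM.ded hd rfl)
    exact hB (hmax.le_of_ge h1 (Set.subset_insert _ _) (Set.mem_insert _ _))
  have hcl : ∀ B, HM Δ B → B ∈ Δ := by
    intro B hB
    by_contra hn
    exact hΔ (.mp (hout B hn) hB)
  have hneg : ∀ B, B.neg ∈ Δ ↔ B ∉ Δ := by
    intro B
    constructor
    · intro h1 h2
      exact hΔ (HM.expl _ (.hyp h1) (.hyp h2))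
    · intro h1
      by_contra h2
      exact hΔ (HM.cases (hout _ h1) (hout _ h2))
  have himp : ∀ B C, B.imp C ∈ Δ ↔ (B ∉ Δ ∨ C ∈ Δ) := by
    intro B C
    constructor
    · intro h1
      by_cases h2 : B ∈ Δ
      · exact .inr (hcl _ (.mp (.hyp h1) (.hyp h2)))
      · exact .inl h2
    · rintro (h1 | h1)
      · exact hcl _ (.mp (.ax3 _ _) (HM.k _ (.hyp ((hneg B).2 h1))))
      · exact hcl _ (HM.k _ (.hyp h1))
  let v : Val :=
    { v1 := fun B => if B ∈ Δ then 1 else 0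
      v2 := fun B => if B.box ∈ Δ then 1 else 0
      neg_eq := by
        intro B
        by_cases h1 : B ∈ Δ <;> simp [hneg, h1]
      imp_eq := by
        intro B C
        by_cases h1 : B ∈ Δ <;> by_cases h2 : C ∈ Δ <;> simp [himp, h1, h2]
      box_eq := fun B => rfl }
  have h1 : v.v1 A = 1 := h v (fun B hB => if_pos (hΓ hB))
  have h2 : v.v1 A = 0 := if_neg (fun hm => hΔ (.hyp hm))
  rw [h2] at h1
  exact absurd h1 (by decide)
end

section
/- Soundness of H_K with respect to the RNmatrix RM_K: for every set of formulas Γ and every formula A, if Γ ⊢_{H_K} A then every valuation v ∈ F_K that designates all formulas of Γ also designates A. -/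
/-- The Hilbert calculus H_K: H plus axiom schema (K). -/
inductive HK : Set Form → Form → Prop
  | hyp {Γ A} : A ∈ Γ → HK Γ A
  | ax1 {Γ} (A B : Form) : HK Γ (A.imp (B.imp A))
  | ax2 {Γ} (A B C : Form) :
      HK Γ ((A.imp (B.imp C)).imp ((A.imp B).imp (A.imp C)))
  | ax3 {Γ} (A B : Form) : HK Γ ((B.neg.imp A.neg).imp (A.imp B))
  | axK {Γ} (A B : Form) :
      HK Γ ((Form.box (A.imp B)).imp ((Form.box A).imp (Form.box B)))
  | mp {Γ A B} : HK Γ (A.imp B) → HK Γ A → HK Γ B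

/-- The restriction defining F_K: valuations satisfying the (K) condition. -/
def FK (v : Val) : Prop :=
  ∀ A B : Form, v.v2 (A.imp B) ≤ max (1 - v.v2 A) (v.v2 B)

/-- Soundness of H_K w.r.t. the RNmatrix RM_K. -/
theorem soundness_HK (Γ : Set Form) (A : Form) (h : HK Γ A) :
    ∀ v : Val, FK v → (∀ B ∈ Γ, v.v1 B = 1) → v.v1 A = 1 := by
  intro v hv hΓ
  induction h with
  | hyp h => exact hΓ _ h
  | ax1 A B =>
    simp only [v.imp_eq]
    generalize v.v1 A = a
    generalize v.v1 B = b
    revert a b; decide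
  | ax2 A B C =>
    simp only [v.imp_eq]
    generalize v.v1 A = a
    generalize v.v1 B = b
    generalize v.v1 C = c
    revert a b c; decide
  | ax3 A B =>
    simp only [v.imp_eq, v.neg_eq]
    generalize v.v1 A = a
    generalize v.v1 B = b
    revert a b; decide
  | axK A B =>
    have h := hv A B
    simp only [v.imp_eq, v.box_eq]
    generalize v.v2 (A.imp B) = c at *
    generalize v.v2 A = a at *
    generalize v.v2 B = b at *
    clear hΓ hv
    revert a b c; decide
  | mp _ _ ih1 ih2 =>
    have h1 := ih1
    have h2 := ih2
    rw [v.imp_eq, h2] at h1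
    simpa using h1
end

section
/- Completeness of H_K with respect to the RNmatrix RM_K: for every set of formulas Γ and every formula A, if every valuation v ∈ F_K that designates all formulas of Γ also designates A, then Γ ⊢_{H_K} A. -/
namespace HK

theorem mono {Γ Δ : Set Form} {A : Form} (h : HK Γ A) (hs : Γ ⊆ Δ) : HK Δ A := by
  induction h with
  | hyp h => exact hyp (hs h)
  | ax1 => exact ax1 _ _
  | ax2 => exact ax2 _ _ _
  | ax3 => exact ax3 _ _
  | axK => exact axK _ _
  | mp _ _ i j => exact mp i j

theorem idd {Γ : Set Form} (A : Form) : HK Γ (A.imp A) :=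
  mp (mp (ax2 A (A.imp A) A) (ax1 _ _)) (ax1 _ _)

theorem ded {Γ' Γ : Set Form} {A B : Form} (h : HK Γ' B) (e : Γ' = insert A Γ) :
    HK Γ (A.imp B) := by
  induction h with
  | hyp h =>
    subst e
    rcases h with rfl | h
    · exact idd _
    · exact mp (ax1 _ _) (hyp h)
  | ax1 => exact mp (ax1 _ _) (ax1 _ _)
  | ax2 => exact mp (ax1 _ _) (ax2 _ _ _)
  | ax3 => exact mp (ax1 _ _) (ax3 _ _)
  | axK => exact mp (ax1 _ _) (axK _ _)
  | mp _ _ i j => exact mp (mp (ax2 _ _ _) i) j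

theorem wk {Γ : Set Form} {A : Form} (B : Form) (h : HK Γ A) : HK (insert B Γ) A :=
  h.mono (Set.subset_insert _ _)

theorem top {Γ : Set Form} (B : Form) : HK (insert B Γ) B := hyp (Set.mem_insert _ _)

theorem efq {Γ : Set Form} {B : Form} (C : Form) (h : HK Γ B) (h' : HK Γ B.neg) : HK Γ C :=
  mp (mp (ax3 _ _) (mp (ax1 _ _) h')) h

theorem clav {Γ : Set Form} {A : Form} (h : HK (insert A.neg Γ) A) : HK Γ A :=
  mp (mp (ax3 (A.imp A) A) (ded (efq _ h (top _)) rfl)) (idd A)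

theorem dne {Γ : Set Form} {A : Form} (h : HK Γ A.neg.neg) : HK Γ A :=
  clav (efq _ (top _) (wk _ h))

theorem negI {Γ : Set Form} {B C : Form} (h : HK (insert B Γ) C) (h' : HK (insert B Γ) C.neg) :
    HK Γ B.neg := by
  apply clav
  have hb : HK (insert B.neg.neg Γ) B := dne (top _)
  exact efq _ (mp (wk _ (ded h rfl)) hb) (mp (wk _ (ded h' rfl)) hb)

theorem cases {Γ : Set Form} {A B : Form} (h : HK (insert B Γ) A) (h' : HK (insert B.neg Γ) A) :
    HK Γ A := by
  apply clav
  refine mp (wk _ (ded h' rfl)) (negI (C := A) ?_ (wk _ (top _)))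
  exact mp (wk _ (wk _ (ded h rfl))) (top _)

theorem fin {c : Set (Set Form)} (hc : IsChain (· ⊆ ·) c) (hn : c.Nonempty) {Γ : Set Form}
    {A : Form} (h : HK Γ A) (e : Γ = ⋃₀ c) : ∃ S ∈ c, HK S A := by
  obtain ⟨S0, h0⟩ := hn
  induction h with
  | hyp h =>
    subst e
    obtain ⟨S, hS, h⟩ := h
    exact ⟨S, hS, hyp h⟩
  | ax1 => exact ⟨S0, h0, ax1 _ _⟩
  | ax2 => exact ⟨S0, h0, ax2 _ _ _⟩
  | ax3 => exact ⟨S0, h0, ax3 _ _⟩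
  | axK => exact ⟨S0, h0, axK _ _⟩
  | mp _ _ i j =>
    obtain ⟨S, hS, a⟩ := i
    obtain ⟨T, hT, b⟩ := j
    rcases hc.total hS hT with l | l
    · exact ⟨T, hT, mp (a.mono l) b⟩
    · exact ⟨S, hS, mp a (b.mono l)⟩

end HK

/-- Completeness of H_K w.r.t. the RNmatrix RM_K. -/
theorem completeness_HK (Γ : Set Form) (A : Form)
    (h : ∀ v : Val, FK v → (∀ B ∈ Γ, v.v1 B = 1) → v.v1 A = 1) :
    HK Γ A := by
  classical
  by_contra hA
  obtain ⟨Δ, hΓ, hm⟩ := zorn_subset_nonempty {S : Set Form | ¬ HK S A} (by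
    intro c hc hch hn
    refine ⟨⋃₀ c, ?_, fun s hs => Set.subset_sUnion_of_mem hs⟩
    intro hu
    obtain ⟨S, hS, hSA⟩ := HK.fin hch hn hu rfl
    exact hc hS hSA) Γ hA
  have hΔ : ¬ HK Δ A := hm.prop
  have out : ∀ B, B ∉ Δ → HK (insert B Δ) A := by
    intro B hB
    by_contra hc
    exact hB (hm.le_of_ge (y := insert B Δ) hc (Set.subset_insert _ _) (Set.mem_insert _ _))
  have cl : ∀ B, HK Δ B → B ∈ Δ := by
    intro B hB
    by_contra hc
    exact hΔ (HK.mp (HK.ded (out B hc) rfl) hB)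
  have hneg : ∀ B, B.neg ∈ Δ ↔ B ∉ Δ := by
    intro B
    constructor
    · intro h1 h2
      exact hΔ (HK.efq _ (HK.hyp h2) (HK.hyp h1))
    · intro h1
      by_contra h2
      exact hΔ (HK.cases (out _ h1) (out _ h2))
  have himp : ∀ B C, B.imp C ∈ Δ ↔ (B ∉ Δ ∨ C ∈ Δ) := by
    intro B C
    constructor
    · intro h1
      by_cases hB : B ∈ Δ
      · exact Or.inr (cl _ (HK.mp (HK.hyp h1) (HK.hyp hB)))
      · exact Or.inl hB
    · rintro (h1 | h1)
      · exact cl _ (HK.ded (HK.efq _ (HK.top _) (HK.wk _ (HK.hyp ((hneg B).2 h1)))) rfl)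
      · exact cl _ (HK.mp (HK.ax1 _ _) (HK.hyp h1))
  let v : Val :=
    { v1 := fun B => if B ∈ Δ then 1 else 0
      v2 := fun B => if B.box ∈ Δ then 1 else 0
      neg_eq := by
        intro B
        by_cases hB : B ∈ Δ <;> simp [hneg, hB]
      imp_eq := by
        intro B C
        by_cases hB : B ∈ Δ <;> by_cases hC : C ∈ Δ <;> simp [himp, hB, hC]
      box_eq := fun B => rfl }
  have hv := h v (by
    intro B C
    have hK := cl _ (HK.axK B C)
    rw [himp, himp] at hK
    change (if (B.imp C).box ∈ Δ then (1 : Fin 2) else 0) ≤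
      max (1 - if B.box ∈ Δ then (1 : Fin 2) else 0) (if C.box ∈ Δ then (1 : Fin 2) else 0)
    by_cases h1 : (B.imp C).box ∈ Δ <;> by_cases h2 : B.box ∈ Δ <;>
      by_cases h3 : C.box ∈ Δ <;> simp [h1, h2, h3] at hK ⊢) (by
    intro B hB
    exact if_pos (hΓ hB))
  have hn : A ∉ Δ := fun hh => hΔ (HK.hyp hh)
  have : v.v1 A = 0 := if_neg hn
  rw [this] at hv
  exact absurd hv (by decide)
end

section
/- Failure of the necessitation rule in the RNmatrix semantics: for any propositional variable p, although every valuation v ∈ F_K designates p→p, there exists a valuation v ∈ F_K such that v1(⊖(p→p)) = 0; hence the rule 'from A infer ⊖A' does not preserve validity over F_K. -/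
/-- The classical part of the valuation with constant `v2 = 0`. -/
def ev0 : Form → Fin 2
  | .var _ => 0
  | .neg A => 1 - ev0 A
  | .box _ => 0
  | .imp A B => max (1 - ev0 A) (ev0 B)

/-- Failure of the necessitation rule over F_K: p→p is designated by every
valuation in F_K, yet some valuation in F_K fails to designate ⊖(p→p). -/
theorem necessitation_fails (p : ℕ) :
    (∀ v : Val, FK v → v.v1 ((Form.var p).imp (Form.var p)) = 1) ∧
    (∃ v : Val, FK v ∧ v.v1 (Form.box ((Form.var p).imp (Form.var p))) = 0) := by
  refine ⟨fun v _ => ?_, ⟨ev0, fun _ => 0, fun _ => rfl, fun _ _ => rfl, fun _ => rfl⟩,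
    fun _ _ => Fin.zero_le _, rfl⟩
  rw [v.imp_eq]
  generalize v.v1 (Form.var p) = x
  revert x
  decide
end
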